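/- arXiv:1710.02329 — 2 statements merged into one kernel-verified Lean document; each statement's English description precedes it below -/
import Mathlib

section
/- Let A be a complete nondeterministic register automaton with a single register r, locations L = {ℓ_1, ..., ℓ_n}, and alphabet Σ, over an infinite data domain D, and let lang be the data language over Σ_lang = Σ ∪ L ∪ {★} defined in the context. Then lang ≠ ∅ if and only if there exist a datum x ∈ D and a data word v ∈ (Σ × D)^+ such that post(L × {x}, v) is a singleton. -/
open scoped Classical

/-- Register constraints over a set `R` of registers: built from the atom `true` and
atoms `= r` for `r ∈ R` using conjunction and negation. -/
inductive RC (R : Type) : Type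
  | tt : RC R
  | req : R → RC R
  | conj : RC R → RC R → RC R
  | neg : RC R → RC R

/-- Satisfaction of a register constraint by a register valuation `ν` and a datum `d`. -/
def RC.sat {R D : Type} (ν : R → D) (d : D) : RC R → Prop
  | RC.tt => True
  | RC.req r => ν r = d
  | RC.conj φ ψ => RC.sat ν d φ ∧ RC.sat ν d ψ
  | RC.neg φ => ¬ RC.sat ν d φ

/-- A configuration: a location together with a register valuation. -/
abbrev Config (L R D : Type) : Type := L × (R → D)

/-- A transition: source location, letter, guard, update set, target location. -/
abbrev RATrans (L A R : Type) : Type := L × A × RC R × Set R × L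

/-- The update `ν[up := d]` of a register valuation. -/
noncomputable def updVal {R D : Type} (ν : R → D) (up : Set R) (d : D) : R → D :=
  fun r => if r ∈ up then d else ν r

/-- One-step successor relation of the register automaton with transition relation `T`:
`Step T q (a, d) q'` holds iff `q' ∈ post(q, (a, d))`. -/
def Step {L A R D : Type} (T : Set (RATrans L A R)) (q : Config L R D) (i : A × D)
    (q' : Config L R D) : Prop :=
  ∃ (φ : RC R) (up : Set R) (ℓ' : L),
    (q.1, i.1, φ, up, ℓ') ∈ T ∧ RC.sat q.2 i.2 φ ∧ q' = (ℓ', updVal q.2 up i.2)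

/-- `post` of a set of configurations on a single input. -/
def postStep {L A R D : Type} (T : Set (RATrans L A R)) (S : Set (Config L R D)) (i : A × D) :
    Set (Config L R D) :=
  {q' | ∃ q ∈ S, Step T q i q'}

/-- `post` of a set of configurations on a data word. -/
def postWord {L A R D : Type} (T : Set (RATrans L A R)) (S : Set (Config L R D)) :
    List (A × D) → Set (Config L R D)
  | [] => S
  | i :: w => postWord T (postStep T S i) w

/-- Completeness: every configuration has at least one successor on every input. -/
def RAComplete (D : Type) {L A R : Type} (T : Set (RATrans L A R)) : Prop :=
  ∀ (q : Config L R D) (i : A × D), ∃ q', Step T q i q'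

/-- Determinism: every configuration has at most one successor on every input. -/
def RADet (D : Type) {L A R : Type} (T : Set (RATrans L A R)) : Prop :=
  ∀ (q : Config L R D) (i : A × D) (q₁ q₂ : Config L R D),
    Step T q i q₁ → Step T q i q₂ → q₁ = q₂

/-- The set of data values occurring in a data word. -/
def dataSet {A D : Type} (w : List (A × D)) : Set D := {d | ∃ p ∈ w, p.2 = d}

/-- A synchronizing data word: a nonempty data word sending the set of all
configurations to a single configuration. -/
def IsSync (D : Type) {L A R : Type} (T : Set (RATrans L A R)) (w : List (A × D)) : Prop :=
  w ≠ [] ∧ ∃ q : Config L R D, postWord T (Set.univ : Set (Config L R D)) w = {q}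

/-- The alphabet `Σ_lang = Σ ∪ L ∪ {★}`: `Sum.inl a` is a letter of `Σ`,
`Sum.inr (Sum.inl ℓ)` is a location-letter, and `Sum.inr (Sum.inr ())` is `★`. -/
abbrev LangLetter (A L : Type) : Type := A ⊕ (L ⊕ Unit)

/-- Encoding of a single (normal) block: its list of location-data pairs followed by
its `Σ`-pair. -/
def encodeBlock {A L D : Type} (b : List (L × D) × (A × D)) : List (LangLetter A L × D) :=
  b.1.map (fun p => ((Sum.inr (Sum.inl p.1) : LangLetter A L), p.2))
    ++ [((Sum.inl b.2.1 : LangLetter A L), b.2.2)]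

/-- A data word of the shape `(★ L⁺ Σ)⁺ ★ ℓ ★` where every `★` carries the datum `y`:
the concatenation of the encoded blocks, each preceded by `(★, y)`, followed by the
final block `(★, y)(ℓ, x'')(★, y)`. -/
def encodeWord {A L D : Type} (y : D) (blocks : List (List (L × D) × (A × D)))
    (fin : L × D) : List (LangLetter A L × D) :=
  (blocks.map (fun b =>
      ((Sum.inr (Sum.inr ()) : LangLetter A L), y) :: encodeBlock b)).flatten
    ++ [((Sum.inr (Sum.inr ()) : LangLetter A L), y),
        ((Sum.inr (Sum.inl fin.1) : LangLetter A L), fin.2),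
        ((Sum.inr (Sum.inr ()) : LangLetter A L), y)]

/-- Condition (5) of the definition of `lang`, between a block `b` and the list `next`
of location-data pairs of the next block: whenever `(ℓ, x')` occurs in `b` and `(a, d)`
is the `Σ`-pair of `b`, then for every transition `(ℓ, a, φ, up, ℓ')` of the automaton
such that `(x', d)` satisfies `φ`, the pair `(ℓ', x'')` occurs in `next`, where
`x'' = d` if `up = {r}` and `x'' = x'` if `up = ∅`. -/
def SuccCond {L A D : Type} (T : Set (RATrans L A Unit)) (b : List (L × D) × (A × D))
    (next : List (L × D)) : Prop :=
  ∀ p ∈ b.1, ∀ (φ : RC Unit) (up : Set Unit) (ℓ' : L),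
    (p.1, b.2.1, φ, up, ℓ') ∈ T → RC.sat (fun _ : Unit => p.2) b.2.2 φ →
      ((() ∈ up → (ℓ', b.2.2) ∈ next) ∧ ((() ∉ up) → (ℓ', p.2) ∈ next))

/-- Membership in the data language `lang` associated with a complete 1-NRA with
transition relation `T` and location enumeration `locs = [ℓ_1, …, ℓ_n]`. -/
def LangMem {L A D : Type} (T : Set (RATrans L A Unit)) (locs : List L)
    (u : List (LangLetter A L × D)) : Prop :=
  ∃ (y x : D) (blocks : List (List (L × D) × (A × D))) (fin : L × D),
    u = encodeWord y blocks fin ∧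
    -- y ≠ x and the shape conditions (1)–(2)
    y ≠ x ∧
    blocks ≠ [] ∧
    (∀ b ∈ blocks, b.1 ≠ []) ∧
    (∀ b, blocks.head? = some b → b.1 = locs.map (fun ℓ => (ℓ, x))) ∧
    -- conditions (3)–(4): only `★` carries the datum `y`
    (∀ b ∈ blocks, (∀ p ∈ b.1, p.2 ≠ y) ∧ b.2.2 ≠ y) ∧
    fin.2 ≠ y ∧
    -- condition (5) between consecutive blocks and for the last block
    (∀ (i : ℕ) (h : i + 1 < blocks.length),
        SuccCond T (blocks.get ⟨i, Nat.lt_of_succ_lt h⟩) (blocks.get ⟨i + 1, h⟩).1) ∧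
    (∀ b, blocks.getLast? = some b → SuccCond T b [fin])

/-!
A list `P` of location-datum pairs stands for a finite set of configurations of a one-register
automaton, and condition (5) says exactly that the set of each block contains the `post`, on the
`Σ`-pair of the preceding block, of the set of that block. Hence reading the `Σ`-pairs of a word of
`lang` leads from `L × {x}` into the set of the final block, a singleton; completeness keeps the
reached set nonempty, so it is that singleton. Conversely, the successive sets reached from
`L × {x}` along `v` are finite because `L` is, so they can be listed as blocks, and no register
value occurs in them besides `x` and the data of `v`; any other datum of the infinite domain serves
as the datum `y` of `★`.
-/

section Post

variable {L A R D : Type} {T : Set (RATrans L A R)} {S S' : Set (Config L R D)}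

theorem postStep_mono (h : S ⊆ S') (i : A × D) : postStep T S i ⊆ postStep T S' i :=
  fun _ ⟨q, hq, hstep⟩ => ⟨q, h hq, hstep⟩

theorem postWord_mono (h : S ⊆ S') (v : List (A × D)) : postWord T S v ⊆ postWord T S' v := by
  induction v generalizing S S' with
  | nil => exact h
  | cons i _ ih => exact ih (postStep_mono h i)

theorem postStep_nonempty (hcomp : RAComplete D T) (hS : S.Nonempty) (i : A × D) :
    (postStep T S i).Nonempty :=
  have ⟨q, hq⟩ := hS
  have ⟨q', hstep⟩ := hcomp q i
  ⟨q', q, hq, hstep⟩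

theorem postWord_nonempty (hcomp : RAComplete D T) (hS : S.Nonempty) (v : List (A × D)) :
    (postWord T S v).Nonempty := by
  induction v generalizing S with
  | nil => exact hS
  | cons i _ ih => exact ih (postStep_nonempty hcomp hS i)

theorem nonempty_of_postWord_nonempty {v : List (A × D)} (h : (postWord T S v).Nonempty) :
    S.Nonempty := by
  induction v generalizing S with
  | nil => exact h
  | cons _ _ ih =>
    obtain ⟨_, q, hq, -⟩ := ih h
    exact ⟨q, hq⟩

theorem finite_postStep [Finite L] [Finite R] (hS : S.Finite) (i : A × D) :
    (postStep T S i).Finite := by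
  let succ (q : Config L R D) (t : Set R × L) : Config L R D := (t.2, updVal q.2 t.1 i.2)
  refine (hS.biUnion fun q _ => Set.finite_range (succ q)).subset ?_
  rintro _ ⟨q, hq, φ, up, ℓ', -, -, rfl⟩
  exact Set.mem_biUnion hq ⟨(up, ℓ'), rfl⟩

theorem register_mem_of_mem_postStep {E : Set D} {r : R} {i : A × D} (hS : ∀ q ∈ S, q.2 r ∈ E)
    (hi : i.2 ∈ E) : ∀ q ∈ postStep T S i, q.2 r ∈ E := by
  rintro _ ⟨q, hq, φ, up, ℓ', -, -, rfl⟩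
  by_cases hr : r ∈ up
  · simpa only [updVal, hr, if_true] using hi
  · simpa only [updVal, hr, if_false] using hS q hq

theorem register_mem_of_mem_postWord {E : Set D} {r : R} {v : List (A × D)}
    (hS : ∀ q ∈ S, q.2 r ∈ E) (hv : ∀ i ∈ v, i.2 ∈ E) : ∀ q ∈ postWord T S v, q.2 r ∈ E := by
  induction v generalizing S with
  | nil => exact hS
  | cons i w ih =>
    obtain ⟨hi, hw⟩ := List.forall_mem_cons.1 hv
    exact ih (register_mem_of_mem_postStep hS hi) hw

end Post

section Configs

variable {L D : Type}

theorem valuation_eq_iff {ν μ : Unit → D} : ν = μ ↔ ν () = μ () := by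
  simp only [funext_iff, Unique.forall_iff, PUnit.default_eq_unit]

/-- The set of one-register configurations listed by `P`, under the identification of
configurations with `L × D`. -/
def configs (P : List (L × D)) : Set (Config L Unit D) :=
  {q | (q.1, q.2 ()) ∈ P}

theorem configs_nonempty_iff {P : List (L × D)} : (configs P).Nonempty ↔ P ≠ [] := by
  refine ⟨?_, fun hP => ?_⟩
  · rintro ⟨q, hq⟩
    exact List.ne_nil_of_mem hq
  · obtain ⟨p, hp⟩ := List.exists_mem_of_ne_nil P hP
    exact ⟨(p.1, fun _ => p.2), hp⟩

theorem finite_configs (P : List (L × D)) : (configs P).Finite := by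
  refine (P.finite_toSet.image fun p => ((p.1, fun _ => p.2) : Config L Unit D)).subset ?_
  exact fun q hq => ⟨_, hq, rfl⟩

theorem configs_singleton (p : L × D) : configs [p] = {(p.1, fun _ => p.2)} := by
  ext ⟨ℓ, ν⟩
  simp [configs, Prod.ext_iff, valuation_eq_iff]

theorem configs_map_pair {locs : List L} (hall : ∀ ℓ, ℓ ∈ locs) (x : D) :
    configs (locs.map fun ℓ => (ℓ, x)) = {q | q.2 = fun _ => x} := by
  ext ⟨ℓ, ν⟩
  simp [configs, hall, valuation_eq_iff, eq_comm]

end Configs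

section Blocks

variable {L A D : Type} {T : Set (RATrans L A Unit)}

theorem succCond_iff {b : List (L × D) × (A × D)} {next : List (L × D)} :
    SuccCond T b next ↔ postStep T (configs b.1) b.2 ⊆ configs next := by
  have mem_configs_updVal (ℓ' : L) (ν : Unit → D) (up : Set Unit) :
      (ℓ', updVal ν up b.2.2) ∈ configs next ↔
        (() ∈ up → (ℓ', b.2.2) ∈ next) ∧ (() ∉ up → (ℓ', ν ()) ∈ next) := by
    by_cases hup : () ∈ up <;> simp [configs, updVal, hup]
  constructor
  · rintro h _ ⟨q, hq, φ, up, ℓ', htrans, hsat, rfl⟩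
    exact (mem_configs_updVal ..).2 (h _ hq φ up ℓ' htrans hsat)
  · intro h p hp φ up ℓ' htrans hsat
    exact (mem_configs_updVal ℓ' (fun _ => p.2) up).1
      (h ⟨(p.1, fun _ => p.2), hp, φ, up, ℓ', htrans, hsat, rfl⟩)

/-- Condition (5) of `lang` along a whole sequence of blocks, `last` being the list of
location-datum pairs of the block that follows them. -/
def IsBlockRun (T : Set (RATrans L A Unit)) (blocks : List (List (L × D) × (A × D)))
    (last : List (L × D)) : Prop :=
  blocks.IsChain (fun b c => SuccCond T b c.1) ∧
    ∀ b, blocks.getLast? = some b → SuccCond T b last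

theorem isBlockRun_singleton {b : List (L × D) × (A × D)} {last : List (L × D)} :
    IsBlockRun T [b] last ↔ SuccCond T b last := by
  simp [IsBlockRun]

theorem isBlockRun_cons_cons {b c : List (L × D) × (A × D)}
    {blocks : List (List (L × D) × (A × D))} {last : List (L × D)} :
    IsBlockRun T (b :: c :: blocks) last ↔
      SuccCond T b c.1 ∧ IsBlockRun T (c :: blocks) last := by
  simp only [IsBlockRun, List.isChain_cons_cons, List.getLast?_cons_cons, and_assoc]

theorem IsBlockRun.postWord_subset {b : List (L × D) × (A × D)}
    {blocks : List (List (L × D) × (A × D))} {last : List (L × D)}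
    (h : IsBlockRun T (b :: blocks) last) :
    postWord T (configs b.1) ((b :: blocks).map Prod.snd) ⊆ configs last := by
  induction blocks generalizing b with
  | nil => exact succCond_iff.1 (isBlockRun_singleton.1 h)
  | cons c blocks ih =>
    obtain ⟨hbc, hrun⟩ := isBlockRun_cons_cons.1 h
    exact (postWord_mono (succCond_iff.1 hbc) _).trans (ih hrun)

variable [Finite L]

/-- A list of the pairs of location and register value of the successors, on input `i`, of the
configurations listed by `P`. -/
noncomputable def postPairs (T : Set (RATrans L A Unit)) (P : List (L × D)) (i : A × D) :
    List (L × D) :=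
  (finite_postStep (T := T) (finite_configs P) i).toFinset.toList.map fun q => (q.1, q.2 ())

theorem configs_postPairs (P : List (L × D)) (i : A × D) :
    configs (postPairs T P i) = postStep T (configs P) i := by
  ext ⟨ℓ, ν⟩
  simp [configs, postPairs, ← valuation_eq_iff]

/-- The blocks formed by the inputs of a data word together with lists of the configurations
reached before each of them, starting from those listed by `P`. -/
noncomputable def postBlocks (T : Set (RATrans L A Unit)) :
    List (L × D) → List (A × D) → List (List (L × D) × (A × D))
  | _, [] => []
  | P, i :: w => (P, i) :: postBlocks T (postPairs T P i) w

theorem isBlockRun_postBlocks {P last : List (L × D)} {i : A × D} {w : List (A × D)}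
    (h : postWord T (configs P) (i :: w) ⊆ configs last) :
    IsBlockRun T (postBlocks T P (i :: w)) last := by
  induction w generalizing P i with
  | nil => exact isBlockRun_singleton.2 (succCond_iff.2 h)
  | cons j w ih =>
    refine isBlockRun_cons_cons.2 ⟨succCond_iff.2 (configs_postPairs P i).ge, ih ?_⟩
    rwa [configs_postPairs]

theorem ne_nil_of_mem_postBlocks {P : List (L × D)} {v : List (A × D)}
    (h : (postWord T (configs P) v).Nonempty) : ∀ b ∈ postBlocks T P v, b.1 ≠ [] := by
  induction v generalizing P with
  | nil => simp [postBlocks]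
  | cons i w ih =>
    have hP : P ≠ [] := configs_nonempty_iff.1 (nonempty_of_postWord_nonempty h)
    refine List.forall_mem_cons.2 ⟨hP, ih ?_⟩
    rwa [configs_postPairs]

theorem data_mem_of_mem_postBlocks {E : Set D} {P : List (L × D)} {v : List (A × D)}
    (hP : ∀ p ∈ P, p.2 ∈ E) (hv : ∀ i ∈ v, i.2 ∈ E) :
    ∀ b ∈ postBlocks T P v, (∀ p ∈ b.1, p.2 ∈ E) ∧ b.2.2 ∈ E := by
  induction v generalizing P with
  | nil => simp [postBlocks]
  | cons i w ih =>
    obtain ⟨hi, hw⟩ := List.forall_mem_cons.1 hv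
    refine List.forall_mem_cons.2 ⟨⟨hP, hi⟩, ih (fun p hp => ?_) hw⟩
    have hpost : ((p.1, fun _ => p.2) : Config L Unit D) ∈ postStep T (configs P) i :=
      (configs_postPairs P i).le hp
    exact register_mem_of_mem_postStep (r := ()) (fun _ hq => hP _ hq) hi _ hpost

end Blocks

section Lang

variable {L A D : Type} {T : Set (RATrans L A Unit)} {locs : List L}

theorem exists_postWord_eq_singleton_of_langMem (hcomp : RAComplete D T)
    (hall : ∀ ℓ, ℓ ∈ locs) {u : List (LangLetter A L × D)} (hu : LangMem T locs u) :
    ∃ (x : D) (v : List (A × D)), v ≠ [] ∧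
      ∃ q : Config L Unit D, postWord T {p | p.2 = fun _ => x} v = {q} := by
  obtain ⟨-, x, blocks, fin, -, -, hblocks, hne, hhead, -, -, hchain, hlast⟩ := hu
  obtain ⟨b, bs, rfl⟩ := List.exists_cons_of_ne_nil hblocks
  have hrun : IsBlockRun T (b :: bs) [fin] := ⟨List.isChain_iff_getElem.2 hchain, hlast⟩
  have hstart : configs b.1 = {p | p.2 = fun _ => x} := by
    rw [hhead b rfl, configs_map_pair hall]
  have hnonempty : (postWord T (configs b.1) ((b :: bs).map Prod.snd)).Nonempty :=
    postWord_nonempty hcomp (configs_nonempty_iff.2 (hne b List.mem_cons_self)) _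
  refine ⟨x, (b :: bs).map Prod.snd, List.cons_ne_nil _ _, (fin.1, fun _ => fin.2), ?_⟩
  rw [← hstart, ← hnonempty.subset_singleton_iff, ← configs_singleton]
  exact hrun.postWord_subset

theorem exists_langMem_of_postWord_eq_singleton [Infinite D] (hall : ∀ ℓ, ℓ ∈ locs) {x : D}
    {v : List (A × D)} (hv : v ≠ []) {q : Config L Unit D}
    (hq : postWord T {p | p.2 = fun _ => x} v = {q}) :
    ∃ u : List (LangLetter A L × D), LangMem T locs u := by
  have : Finite L := Set.finite_univ_iff.1 (locs.finite_toSet.subset fun ℓ _ => hall ℓ)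
  obtain ⟨y, hy⟩ := (List.finite_toSet (x :: v.map Prod.snd)).exists_notMem
  have hyx : x ≠ y := fun h => hy (h ▸ List.mem_cons_self)
  have hyv : ∀ i ∈ v, i.2 ≠ y := fun i hi h =>
    hy (List.mem_cons_of_mem _ (List.mem_map.2 ⟨i, hi, h⟩))
  have hqy : q.2 () ≠ y := by
    refine register_mem_of_mem_postWord (E := {y}ᶜ) ?_ hyv q (hq.ge rfl)
    rintro ⟨ℓ, _⟩ rfl
    exact hyx
  let P : List (L × D) := locs.map fun ℓ => (ℓ, x)
  have hPy : ∀ p ∈ P, p.2 ≠ y := List.forall_mem_map.2 fun _ _ => hyx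
  have hpost : postWord T (configs P) v = {q} := by rw [configs_map_pair hall, hq]
  have hne : ∀ b ∈ postBlocks T P v, b.1 ≠ [] :=
    ne_nil_of_mem_postBlocks (hpost ▸ Set.singleton_nonempty q)
  obtain ⟨i, w, rfl⟩ := List.exists_cons_of_ne_nil hv
  have hrun : IsBlockRun T (postBlocks T P (i :: w)) [(q.1, q.2 ())] :=
    isBlockRun_postBlocks (by rw [hpost, configs_singleton])
  refine ⟨_, y, x, postBlocks T P (i :: w), (q.1, q.2 ()), rfl, hyx.symm, List.cons_ne_nil _ _,
    hne, ?_, data_mem_of_mem_postBlocks (E := {y}ᶜ) hPy hyv, hqy,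
    List.isChain_iff_getElem.1 hrun.1, hrun.2⟩
  rintro b ⟨⟩
  rfl

theorem stmt14_general [Infinite D] (hcomp : RAComplete D T) (hall : ∀ ℓ, ℓ ∈ locs) :
    (∃ u : List (LangLetter A L × D), LangMem T locs u) ↔
    (∃ (x : D) (v : List (A × D)), v ≠ [] ∧
      ∃ q : Config L Unit D,
        postWord T {p : Config L Unit D | p.2 = fun _ => x} v = {q}) :=
  ⟨fun ⟨_, hu⟩ => exists_postWord_eq_singleton_of_langMem hcomp hall hu,
    fun ⟨_, _, hv, _, hq⟩ => exists_langMem_of_postWord_eq_singleton hall hv hq⟩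

end Lang

/-- for a complete 1-NRA with locations `ℓ_1, …, ℓ_n`, the language
`lang` is nonempty iff there are a datum `x` and a nonempty data word `v` such that
`post(L × {x}, v)` is a singleton. -/
theorem stmt14 {L A D : Type} [Fintype L] [Fintype A] [Infinite D]
    (T : Set (RATrans L A Unit)) (hcomp : RAComplete D T)
    (locs : List L) (hnodup : locs.Nodup) (hall : ∀ ℓ : L, ℓ ∈ locs) :
    (∃ u : List (LangLetter A L × D), LangMem T locs u) ↔
    (∃ (x : D) (v : List (A × D)), v ≠ [] ∧
      ∃ q : Config L Unit D,
        postWord T {p : Config L Unit D | p.2 = fun _ => x} v = {q}) :=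
  stmt14_general hcomp hall
end

section
/- Let A be a complete deterministic register automaton with k registers over an infinite data domain D, and let X ⊆ D be any set with |X| = 2k + 1. Then A has a synchronizing data word if and only if A has a synchronizing data word w with data(w) ⊆ X. -/
open scoped Classical

/-!
Since registers are only compared for equality with the current datum, a run commutes with renaming
the data. Two configurations hold at most `2k` data values, so, whatever datum a word presents next,
one of the `2k + 1` values of `X` is free to stand for it: every word can be simulated on a pair of
configurations by a word over `X`. A datum that is stored initially but does not lie in `X` need
not be renamed into `X` as long as the simulated word does not contain it.

Given a synchronizing word `w`, pick a datum `c` outside `X` and outside `w`. Simulating `w` merges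
any two configurations over `X ∪ {c}`; there are finitely many of these, so a single word over `X`
merges them all. It merges all other configurations too, because reading data in `X` cannot
distinguish a stored value outside `X` from `c`.
-/

section Merging

variable {Q I : Type*} {δ : Q → I → Q} {J : Set I} {C : Set Q}

theorem foldl_mem_of_mapsTo (hC : ∀ i ∈ J, Set.MapsTo (δ · i) C C) {u : List I}
    (hu : ∀ i ∈ u, i ∈ J) {q : Q} (hq : q ∈ C) : u.foldl δ q ∈ C :=
  List.foldlRecOn u δ hq fun _ hp i hi => hC i (hu i hi) hp

theorem exists_foldl_const_of_pairwise (hfin : C.Finite) (hne : C.Nonempty)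
    (hC : ∀ i ∈ J, Set.MapsTo (δ · i) C C)
    (hpair : ∀ q₁ ∈ C, ∀ q₂ ∈ C, ∃ u : List I, (∀ i ∈ u, i ∈ J) ∧ u.foldl δ q₁ = u.foldl δ q₂) :
    ∃ u : List I, (∀ i ∈ u, i ∈ J) ∧ ∃ p ∈ C, ∀ q ∈ C, u.foldl δ q = p := by
  refine hfin.induction_on_subset (motive := fun S _ =>
    ∃ u : List I, (∀ i ∈ u, i ∈ J) ∧ ∃ p ∈ C, ∀ q ∈ S, u.foldl δ q = p) C ?empty ?insert
  case empty => exact ⟨[], by simp, hne.some, hne.some_mem, by simp⟩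
  case insert =>
    rintro q S hq - - ⟨u, hu, p, hp, hS⟩
    obtain ⟨v, hv, hqp⟩ := hpair _ (foldl_mem_of_mapsTo hC hu hq) p hp
    refine ⟨u ++ v, List.forall_mem_append.2 ⟨hu, hv⟩, v.foldl δ p,
      foldl_mem_of_mapsTo hC hv hp, ?_⟩
    rintro s (rfl | hs)
    · rw [List.foldl_append, hqp]
    · rw [List.foldl_append, hS s hs]

end Merging

theorem exists_injOn_insert_extension {D E : Type*} {V Y : Set D} {X : Set E} {f : D → E}
    (hVX : V.encard < X.encard) (hf : V.InjOn f) (hfX : Set.MapsTo f (V ∩ Y) X) (d : D) :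
    ∃ g : D → E, Set.EqOn g f V ∧ (insert d V).InjOn g ∧ Set.MapsTo g (insert d V ∩ Y) X := by
  by_cases hd : d ∈ V
  · rw [Set.insert_eq_of_mem hd]
    exact ⟨f, Set.eqOn_refl f V, hf, hfX⟩
  obtain ⟨x, hxX, hx⟩ : ∃ x ∈ X, x ∉ f '' V :=
    Set.not_subset.1 fun hXV =>
      ((Set.encard_le_encard hXV).trans (Set.encard_image_le f V)).not_gt hVX
  have heq : Set.EqOn (Function.update f d x) f V := fun y hy =>
    Function.update_of_ne (ne_of_mem_of_not_mem hy hd) x f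
  refine ⟨Function.update f d x, heq, ?_, ?_⟩
  · rw [Set.injOn_insert hd, heq.image_eq, Function.update_self]
    exact ⟨hf.congr heq.symm, hx⟩
  · rintro y ⟨rfl | hyV, hyY⟩
    · rwa [Function.update_self]
    · rw [heq hyV]
      exact hfX ⟨hyV, hyY⟩

section Data

variable {A D : Type} {u v : List (A × D)} {X : Set D}

theorem dataSet_subset_iff : dataSet u ⊆ X ↔ ∀ i ∈ u, i.2 ∈ X := by
  simp only [dataSet, Set.subset_def, Set.mem_ofPred_eq, forall_exists_index, and_imp,
    forall_apply_eq_imp_iff₂]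

theorem dataSet_nil_subset : dataSet ([] : List (A × D)) ⊆ X :=
  dataSet_subset_iff.2 (List.forall_mem_nil _)

theorem dataSet_cons (i : A × D) (u : List (A × D)) :
    dataSet (i :: u) = insert i.2 (dataSet u) := by
  ext d
  simp [dataSet, eq_comm]

theorem dataSet_append_subset_iff :
    dataSet (u ++ v) ⊆ X ↔ dataSet u ⊆ X ∧ dataSet v ⊆ X := by
  simp only [dataSet_subset_iff, List.forall_mem_append]

theorem finite_dataSet (u : List (A × D)) : (dataSet u).Finite :=
  u.finite_toSet.image Prod.snd

end Data

theorem RC.sat_congr {R D E : Type} {ν : R → D} {d : D} {ν' : R → E} {d' : E}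
    (h : ∀ r, ν r = d ↔ ν' r = d') (φ : RC R) : φ.sat ν d ↔ φ.sat ν' d' := by
  induction φ with
  | tt => exact Iff.rfl
  | req r => exact h r
  | conj _ _ ihφ ihψ => exact and_congr ihφ ihψ
  | neg _ ih => exact not_congr ih

theorem updVal_comp {R D E : Type} (f : D → E) (ν : R → D) (up : Set R) (d : D) :
    updVal (f ∘ ν) up (f d) = f ∘ updVal ν up d := by
  funext r
  exact (apply_ite f _ _ _).symm

theorem range_updVal_subset {R D : Type} (ν : R → D) (up : Set R) (d : D) :
    Set.range (updVal ν up d) ⊆ insert d (Set.range ν) := by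
  rintro _ ⟨r, rfl⟩
  by_cases hr : r ∈ up <;> simp [updVal, hr]

namespace Config

variable {ι : Type*} {L R D E : Type}

/-- The configuration obtained by applying `f` to the content of every register. -/
def rename (f : D → E) (q : Config L R D) : Config L R E := (q.1, f ∘ q.2)

theorem rename_congr {f g : D → E} {q : Config L R D} (h : Set.EqOn f g (Set.range q.2)) :
    q.rename f = q.rename g :=
  congrArg (Prod.mk q.1) (Set.eqOn_range.1 h)

theorem range_rename (f : D → E) (q : Config L R D) :
    Set.range (q.rename f).2 = f '' Set.range q.2 :=
  Set.range_comp f q.2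

theorem rename_eq_iff {X : Set D} {f : D → D} (hf : ∀ x ∈ X, ∀ y, f y = x ↔ y = x)
    {p q : Config L R D} (hp : Set.range p.2 ⊆ X) : q.rename f = p ↔ q = p := by
  simp only [Prod.ext_iff, rename, funext_iff, Function.comp_apply,
    hf _ (hp (Set.mem_range_self _))]

/-- The data stored in the registers of a family of configurations. -/
def values (q : ι → Config L R D) : Set D := ⋃ j, Set.range (q j).2

theorem range_subset_values (q : ι → Config L R D) (j : ι) : Set.range (q j).2 ⊆ values q :=
  Set.subset_iUnion (fun j => Set.range (q j).2) j

theorem encard_values_le [Finite ι] [Finite R] (q : ι → Config L R D) :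
    (values q).encard ≤ (Nat.card ι * Nat.card R : ℕ) := by
  have hvalues : values q = (fun jr : ι × R => (q jr.1).2 jr.2) '' Set.univ := by
    ext d
    simp [values]
  calc (values q).encard ≤ (Set.univ : Set (ι × R)).encard := hvalues ▸ Set.encard_image_le _ _
    _ = (Nat.card ι * Nat.card R : ℕ) := by
      rw [Set.encard_univ, ENat.card_eq_coe_natCard, Nat.card_prod]

theorem finite_setOf_range_subset [Finite L] [Finite R] {X : Set D} (hX : X.Finite) :
    {q : Config L R D | Set.range q.2 ⊆ X}.Finite := by
  refine (Set.finite_univ.prod (Set.Finite.pi fun _ : R => hX)).subset fun q hq => ?_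
  exact ⟨Set.mem_univ _, fun r _ => hq (Set.mem_range_self r)⟩

end Config

namespace RAComplete

variable {ι : Type*} {L A R D : Type} {T : Set (RATrans L A R)} (hT : RAComplete D T)

/-- A successor of `q` on input `i`: the transition function when `T` is also deterministic. -/
noncomputable def next (q : Config L R D) (i : A × D) : Config L R D := (hT q i).choose

/-- The configuration reached from `q` on a data word by iterating `RAComplete.next`. -/
noncomputable def run (q : Config L R D) (w : List (A × D)) : Config L R D := w.foldl hT.next q

theorem run_append (q : Config L R D) (u v : List (A × D)) :
    hT.run q (u ++ v) = hT.run (hT.run q u) v :=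
  List.foldl_append

theorem step_next (q : Config L R D) (i : A × D) : Step T q i (hT.next q i) := (hT q i).choose_spec

theorem step_iff_next_eq (hdet : RADet D T) {q : Config L R D} {i : A × D} {q' : Config L R D} :
    Step T q i q' ↔ hT.next q i = q' :=
  ⟨hdet q i _ _ (hT.step_next q i), fun h => h ▸ hT.step_next q i⟩

theorem postWord_eq_image_run (hdet : RADet D T) (w : List (A × D)) (S : Set (Config L R D)) :
    postWord T S w = (hT.run · w) '' S := by
  induction w generalizing S with
  | nil => exact (Set.image_id S).symm
  | cons i w ih =>
    have hpost : postStep T S i = (hT.next · i) '' S := by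
      simp only [postStep, hT.step_iff_next_eq hdet, Set.image]
    rw [postWord, ih, hpost, Set.image_image]
    rfl

theorem isSync_iff_run (hdet : RADet D T) {w : List (A × D)} :
    IsSync D T w ↔ w ≠ [] ∧ ∃ p, ∀ q, hT.run q w = p := by
  refine and_congr_right fun _ => exists_congr fun p => ?_
  have : Nonempty (Config L R D) := ⟨p⟩
  rw [hT.postWord_eq_image_run hdet, Set.image_univ, Set.range_eq_singleton_iff]

theorem range_next_subset (q : Config L R D) (i : A × D) :
    Set.range (hT.next q i).2 ⊆ insert i.2 (Set.range q.2) := by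
  obtain ⟨φ, up, ℓ', -, -, hnext⟩ := hT.step_next q i
  rw [hnext]
  exact range_updVal_subset q.2 up i.2

theorem range_run_subset (q : Config L R D) (w : List (A × D)) :
    Set.range (hT.run q w).2 ⊆ Set.range q.2 ∪ dataSet w := by
  induction w generalizing q with
  | nil => exact Set.subset_union_left
  | cons i w ih =>
    calc Set.range (hT.run (hT.next q i) w).2
        ⊆ Set.range (hT.next q i).2 ∪ dataSet w := ih _
      _ ⊆ insert i.2 (Set.range q.2) ∪ dataSet w :=
        Set.union_subset_union_left _ (hT.range_next_subset q i)
      _ = Set.range q.2 ∪ dataSet (i :: w) := by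
        rw [dataSet_cons, Set.insert_union, Set.union_insert]

theorem range_subset_dataSet_of_run_const [Nontrivial D] {w : List (A × D)} {p : Config L R D}
    (hw : ∀ q, hT.run q w = p) : Set.range p.2 ⊆ dataSet w := by
  rintro _ ⟨r, rfl⟩
  obtain ⟨c, hc⟩ := exists_ne (p.2 r)
  have hmem := hT.range_run_subset (p.1, fun _ => c) w
  rw [hw] at hmem
  rcases hmem (Set.mem_range_self r) with ⟨_, hcr⟩ | hr
  · exact absurd hcr hc
  · exact hr

theorem next_rename (hdet : RADet D T) {f : D → D} {q : Config L R D} {a : A} {d : D}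
    (h : ∀ y ∈ Set.range q.2, f y = f d → y = d) :
    hT.next (q.rename f) (a, f d) = (hT.next q (a, d)).rename f := by
  obtain ⟨φ, up, ℓ', htrans, hsat, hnext⟩ := hT.step_next q (a, d)
  have hatom (r : R) : q.2 r = d ↔ f (q.2 r) = f d :=
    ⟨congrArg f, h _ (Set.mem_range_self r)⟩
  rw [← hT.step_iff_next_eq hdet, hnext]
  exact ⟨φ, up, ℓ', htrans, (RC.sat_congr hatom φ).1 hsat,
    Prod.ext rfl (updVal_comp f q.2 up d).symm⟩

theorem run_rename_of_dataSet_subset (hdet : RADet D T) {X : Set D} {f : D → D}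
    (hf : ∀ x ∈ X, ∀ y, f y = x ↔ y = x) {u : List (A × D)} (hu : dataSet u ⊆ X)
    (q : Config L R D) : hT.run (q.rename f) u = (hT.run q u).rename f := by
  induction u generalizing q with
  | nil => rfl
  | cons i u ih =>
    rw [dataSet_cons, Set.insert_subset_iff] at hu
    have hfix : f i.2 = i.2 := (hf i.2 hu.1 i.2).2 rfl
    have hnext : hT.next (q.rename f) (i.1, f i.2) = (hT.next q i).rename f :=
      hT.next_rename hdet fun y _ hy => (hf i.2 hu.1 y).1 (hy.trans hfix)
    rw [hfix] at hnext
    calc hT.run (hT.next (q.rename f) i) u = hT.run ((hT.next q i).rename f) u := by rw [← hnext]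
      _ = (hT.run (hT.next q i) u).rename f := ih hu.2 _

theorem exists_simulating_word [Finite ι] [Finite R] (hdet : RADet D T) {X Y : Set D}
    (hX : (Nat.card ι * Nat.card R : ℕ) < X.encard) {w : List (A × D)} (hw : dataSet w ⊆ Y)
    (q : ι → Config L R D) {f : D → D} (hf : (Config.values q).InjOn f)
    (hfX : Set.MapsTo f (Config.values q ∩ Y) X) :
    ∃ (u : List (A × D)) (g : D → D), dataSet u ⊆ X ∧
      (∀ j, hT.run ((q j).rename f) u = (hT.run (q j) w).rename g) ∧
      Set.MapsTo g (Config.values (fun j => hT.run (q j) w) ∩ Y) X := by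
  induction w generalizing q f with
  | nil => exact ⟨[], f, dataSet_nil_subset, fun _ => rfl, hfX⟩
  | cons i w ih =>
    obtain ⟨a, d⟩ := i
    rw [dataSet_cons, Set.insert_subset_iff] at hw
    obtain ⟨f', heq, hinj, hmaps⟩ :=
      exists_injOn_insert_extension ((Config.encard_values_le q).trans_lt hX) hf hfX d
    have hsub : Config.values (fun j => hT.next (q j) (a, d)) ⊆ insert d (Config.values q) :=
      Set.iUnion_subset fun j => (hT.range_next_subset _ _).trans
        (Set.insert_subset_insert (Config.range_subset_values q j))
    have hnext (j : ι) :
        hT.next ((q j).rename f) (a, f' d) = (hT.next (q j) (a, d)).rename f' := by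
      have hrange := Config.range_subset_values q j
      rw [← Config.rename_congr (heq.mono hrange)]
      exact hT.next_rename hdet fun y hy hyd =>
        hinj (Set.mem_insert_of_mem d (hrange hy)) (Set.mem_insert d _) hyd
    obtain ⟨u, g, hu, hrun, hg⟩ :=
      ih hw.2 _ (hinj.mono hsub) (hmaps.mono_left (Set.inter_subset_inter_left Y hsub))
    refine ⟨(a, f' d) :: u, g, ?_, fun j => ?_, hg⟩
    · rw [dataSet_cons]
      exact Set.insert_subset (hmaps ⟨Set.mem_insert d _, hw.1⟩) hu
    · calc hT.run (hT.next ((q j).rename f) (a, f' d)) u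
          = hT.run ((hT.next (q j) (a, d)).rename f') u := by rw [hnext]
        _ = (hT.run (hT.next (q j) (a, d)) w).rename g := hrun j

theorem exists_run_eq_of_run_eq [Finite R] (hdet : RADet D T) {X : Set D}
    (hX : (2 * Nat.card R : ℕ) < X.encard) {w : List (A × D)} {p q₁ q₂ : Config L R D}
    (h₁ : hT.run q₁ w = p) (h₂ : hT.run q₂ w = p) (hp : Set.range p.2 ⊆ dataSet w)
    (hq₁ : Set.range q₁.2 ∩ dataSet w ⊆ X) (hq₂ : Set.range q₂.2 ∩ dataSet w ⊆ X) :
    ∃ u : List (A × D), dataSet u ⊆ X ∧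
      ∃ p' : Config L R D, Set.range p'.2 ⊆ X ∧ hT.run q₁ u = p' ∧ hT.run q₂ u = p' := by
  have hvalues : Set.MapsTo id (Config.values ![q₁, q₂] ∩ dataSet w) X := by
    rintro y ⟨hy, hyw⟩
    obtain ⟨j, hj⟩ := Set.mem_iUnion.1 hy
    fin_cases j
    exacts [hq₁ ⟨hj, hyw⟩, hq₂ ⟨hj, hyw⟩]
  obtain ⟨u, g, hu, hrun, hg⟩ := hT.exists_simulating_word hdet (by rwa [Nat.card_fin])
    subset_rfl ![q₁, q₂] (Set.injOn_id _) hvalues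
  refine ⟨u, hu, p.rename g, ?_, h₁ ▸ hrun 0, h₂ ▸ hrun 1⟩
  rw [Config.range_rename, Set.image_subset_iff]
  intro y hy
  refine hg ⟨Set.mem_iUnion.2 ⟨0, ?_⟩, hp hy⟩
  rwa [← h₁] at hy

theorem exists_run_const_on_of_run_const [Finite L] [Finite R] [Nontrivial D] (hdet : RADet D T)
    {X Z : Set D} (hX : (2 * Nat.card R : ℕ) < X.encard) (hXZ : X ⊆ Z) (hZ : Z.Finite)
    {w : List (A × D)} (hZw : Z ∩ dataSet w ⊆ X) {p : Config L R D} (hw : ∀ q, hT.run q w = p) :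
    ∃ u : List (A × D), dataSet u ⊆ X ∧ ∃ p' : Config L R D, Set.range p'.2 ⊆ X ∧
      ∀ q : Config L R D, Set.range q.2 ⊆ Z → hT.run q u = p' := by
  let C : Set (Config L R D) := {q | Set.range q.2 ⊆ Z}
  have hC : ∀ i ∈ {i : A × D | i.2 ∈ X}, Set.MapsTo (hT.next · i) C C := fun i hi q hq =>
    (hT.range_next_subset q i).trans (Set.insert_subset (hXZ hi) hq)
  have hCw : ∀ q ∈ C, Set.range q.2 ∩ dataSet w ⊆ X := fun _ hq =>
    (Set.inter_subset_inter_left _ hq).trans hZw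
  have hmerge (q₁ : Config L R D) (hq₁ : q₁ ∈ C) (q₂ : Config L R D) (hq₂ : q₂ ∈ C) :=
    hT.exists_run_eq_of_run_eq hdet hX (hw q₁) (hw q₂)
      (hT.range_subset_dataSet_of_run_const hw) (hCw q₁ hq₁) (hCw q₂ hq₂)
  obtain ⟨x, hx⟩ : X.Nonempty := Set.encard_pos.1 (pos_of_gt hX)
  have hne : C.Nonempty := ⟨(p.1, fun _ => x), Set.range_subset_iff.2 fun _ => hXZ hx⟩
  obtain ⟨u, hu, s, hs, hus⟩ := exists_foldl_const_of_pairwise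
    (Config.finite_setOf_range_subset hZ) hne hC fun q₁ hq₁ q₂ hq₂ =>
      let ⟨v, hv, _, _, h₁, h₂⟩ := hmerge q₁ hq₁ q₂ hq₂
      ⟨v, dataSet_subset_iff.1 hv, h₁.trans h₂.symm⟩
  -- `s` may still store data outside `X`; a further word over `X` removes them.
  obtain ⟨v, hv, p', hp', hsv, -⟩ := hmerge s hs s hs
  refine ⟨u ++ v, dataSet_append_subset_iff.2 ⟨dataSet_subset_iff.2 hu, hv⟩, p', hp',
    fun q hq => ?_⟩
  rw [hT.run_append, ← hsv]
  exact congrArg (hT.run · v) (hus q hq)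

theorem exists_run_const_of_run_const [Finite L] [Finite R] [Infinite D] (hdet : RADet D T)
    {X : Set D} (hXfin : X.Finite) (hX : (2 * Nat.card R : ℕ) < X.encard) {w : List (A × D)}
    {p : Config L R D} (hw : ∀ q, hT.run q w = p) :
    ∃ u : List (A × D), dataSet u ⊆ X ∧ ∃ p', ∀ q, hT.run q u = p' := by
  obtain ⟨c, hc⟩ := (hXfin.union (finite_dataSet w)).exists_notMem
  obtain ⟨hcX, hcw⟩ := not_or.1 hc
  have hXcw : insert c X ∩ dataSet w ⊆ X := fun y hy =>
    hy.1.resolve_left fun hyc => hcw (hyc ▸ hy.2)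
  obtain ⟨u, hu, p', hp', hrun⟩ := hT.exists_run_const_on_of_run_const hdet hX
    (Set.subset_insert c X) (hXfin.insert c) hXcw hw
  let f : D → D := fun y => if y ∈ X then y else c
  have hf : ∀ x ∈ X, ∀ y, f y = x ↔ y = x := by grind
  refine ⟨u, hu, p', fun q => ?_⟩
  have hq : Set.range (q.rename f).2 ⊆ insert c X := by
    rintro _ ⟨r, rfl⟩
    by_cases hr : q.2 r ∈ X <;> simp [Config.rename, f, hr]
  rw [← Config.rename_eq_iff hf hp', ← hT.run_rename_of_dataSet_subset hdet hf hu, hrun _ hq]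

end RAComplete

theorem stmt15_general {L A R D : Type} [Finite L] [Finite R] [Infinite D]
    (T : Set (RATrans L A R)) (hcomp : RAComplete D T) (hdet : RADet D T)
    (X : Set D) (hX : (2 * Nat.card R + 1 : ℕ) ≤ X.encard) :
    (∃ w : List (A × D), IsSync D T w) ↔
    (∃ w : List (A × D), IsSync D T w ∧ dataSet w ⊆ X) := by
  refine ⟨fun ⟨w, hw⟩ => ?_, fun ⟨w, hw, _⟩ => ⟨w, hw⟩⟩
  obtain ⟨hne, p, hp⟩ := (hcomp.isSync_iff_run hdet).1 hw
  obtain ⟨X', hX'X, hX'⟩ := Set.exists_subset_encard_eq hX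
  obtain ⟨u, hu, p', hp'⟩ := hcomp.exists_run_const_of_run_const hdet
    (Set.finite_of_encard_eq_coe hX') (hX' ▸ by exact_mod_cast Nat.lt_succ_self _) hp
  obtain ⟨x, hx⟩ : X.Nonempty :=
    Set.encard_pos.1 (lt_of_lt_of_le (by exact_mod_cast Nat.succ_pos _) hX)
  -- `u` may be empty, so one more letter is read.
  let i : A × D := ((w.head hne).1, x)
  refine ⟨u ++ [i], (hcomp.isSync_iff_run hdet).2 ⟨by simp, hcomp.run p' [i], fun q => ?_⟩, ?_⟩
  · rw [hcomp.run_append, hp']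
  · exact dataSet_append_subset_iff.2 ⟨hu.trans hX'X, dataSet_subset_iff.2 (by simpa [i] using hx)⟩

/-- for a complete `k`-DRA and any set `X ⊆ D` with `|X| = 2k + 1`, the
automaton has a synchronizing data word iff it has one using only data from `X`. -/
theorem stmt15 {L A R D : Type} [Fintype L] [Fintype A] [Fintype R] [Infinite D]
    (T : Set (RATrans L A R))
    (hcomp : RAComplete D T) (hdet : RADet D T)
    (X : Set D) (hX : X.ncard = 2 * Fintype.card R + 1) :
    (∃ w : List (A × D), IsSync D T w) ↔
    (∃ w : List (A × D), IsSync D T w ∧ dataSet w ⊆ X) :=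
  stmt15_general T hcomp hdet X <| by
    rw [Nat.card_eq_fintype_card, ← hX]
    exact Set.ncard_le_encard X
end
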